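/- arXiv:2404.13137 — 4 statements merged into one kernel-verified Lean document; each statement's English description precedes it below -/
import Mathlib

section
/- In the non-stabilizing example on vertex set {u, v, s} with sink s (edges {uv, vs} at even times, {uv, us} at odd times, parallel toppling, initial configuration one grain on u and none on v), the total number of grains on the non-sink vertices equals exactly 1 at every time t; no grain ever falls into the sink. -/
/-!
Evolutive graph on vertex set {u, v, s} with sink s.
At even times t the edge set is {uv, vs}; at odd times it is {uv, us}.
Hence deg u = 1, deg v = 2 at even times and deg u = 2, deg v = 1 at odd times.
A configuration records the grains on the non-sink vertices (u, v) as a pair.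
-/

/-- Degree of the non-sink vertex `u` in the graph `G_t`. -/
def degU (t : ℕ) : ℕ := if Even t then 1 else 2

/-- Degree of the non-sink vertex `v` in the graph `G_t`. -/
def degV (t : ℕ) : ℕ := if Even t then 2 else 1

/-- Number of edges between `u` and the sink `s` in `G_t`. -/
def mUS (t : ℕ) : ℕ := if Even t then 0 else 1

/-- Number of edges between `v` and the sink `s` in `G_t`. -/
def mVS (t : ℕ) : ℕ := if Even t then 1 else 0

/-- Parallel toppling step at time `t`: every non-sink vertex with at least as many
grains as its degree in `G_t` topples once, sending one grain along each incident
edge of `G_t` (there is always exactly one edge between `u` and `v`; grains sent to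
the sink leave the system). -/
def step (t : ℕ) (c : ℕ × ℕ) : ℕ × ℕ :=
  ((if degU t ≤ c.1 then c.1 - degU t else c.1) + (if degV t ≤ c.2 then 1 else 0),
   (if degV t ≤ c.2 then c.2 - degV t else c.2) + (if degU t ≤ c.1 then 1 else 0))

/-- The trajectory of configurations starting from `(1, 0)` at time `0`. -/
def traj : ℕ → ℕ × ℕ
  | 0 => (1, 0)
  | t + 1 => step t (traj t)

/-- The number of grains falling into the sink during the parallel toppling step at
time `t`: each toppling non-sink vertex sends one grain along each of its edges to
the sink. -/
def sinkGain (t : ℕ) : ℕ :=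
  (if degU t ≤ (traj t).1 then mUS t else 0) + (if degV t ≤ (traj t).2 then mVS t else 0)

/-- The trajectory has period two: the single grain sits on `u` at even times and on `v` at
odd times, i.e. always on the vertex that has degree `1` in `G_t`, so it moves along `uv`. -/
theorem traj_eq (t : ℕ) : traj t = if Even t then (1, 0) else (0, 1) := by
  induction t with
  | zero => simp [traj]
  | succ t ih =>
    by_cases h : Even t <;> simp [traj, ih, step, degU, degV, h, Nat.even_add_one]

/-- At every time the total number of grains on the non-sink vertices equals exactly
`1`, and no grain ever falls into the sink. -/
theorem total_grains_conserved :
    (∀ t : ℕ, (traj t).1 + (traj t).2 = 1) ∧ (∀ t : ℕ, sinkGain t = 0) := by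
  constructor <;> intro t <;> by_cases h : Even t <;>
    simp [sinkGain, traj_eq, degU, degV, mUS, mVS, h]
end

section
/- Let G be a finite multigraph with a designated sink vertex q, with m(u,v) denoting the number of edges between u and v, and let c be a configuration (a non-negative integer number of grains on each non-sink vertex). Let S be the set of non-sink vertices that are unstable in c, i.e., c_w ≥ deg_G(w). Then for every ordering w_1, …, w_k of S, sequentially toppling w_1, …, w_k is legal (each w_i is unstable in the configuration obtained after toppling w_1, …, w_{i−1}), and the resulting configuration is independent of the ordering: its value at each non-sink vertex x equals c_x − [x ∈ S]·deg_G(x) + Σ_{w ∈ S, w ≠ x} m(w, x). -/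
/-!
Toppling a list of distinct vertices that are all unstable at the start has a closed form that
depends only on the underlying set (`foldl_topple_apply`): toppling `a` only adds grains at the
other vertices, so those stay unstable, and no truncated subtraction ever loses information.
The final value is this formula for the whole ordering. Legality is the same formula for the
prefix before a vertex `v`: since `v` does not occur there, `v` has lost no grains.
-/

/-- The value at `x` after toppling a duplicate-free list of vertices, each of which is unstable in
the starting configuration. -/
theorem foldl_topple_apply {V : Type*} [DecidableEq V] (m : V → V → ℕ) (deg : V → ℕ)
    (topple : V → (V → ℕ) → (V → ℕ))
    (htopple : ∀ (w : V) (d : V → ℕ) (x : V),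
      topple w d x = if x = w then d x - deg w else d x + m w x)
    (l : List V) (hnd : l.Nodup) (d : V → ℕ) (hd : ∀ w ∈ l, deg w ≤ d w) (x : V) :
    (l.foldl (fun d w => topple w d) d) x =
      d x - (if x ∈ l then deg x else 0) + ∑ w ∈ l.toFinset.erase x, m w x := by
  induction l generalizing d with
  | nil => simp
  | cons a t ih =>
    obtain ⟨hat, hnt⟩ := List.nodup_cons.mp hnd
    have hd' : ∀ w ∈ t, deg w ≤ topple a d w := by
      intro w hw
      have hwa : w ≠ a := fun h => hat (h ▸ hw)
      rw [htopple, if_neg hwa]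
      exact (hd w (List.mem_cons_of_mem _ hw)).trans (Nat.le_add_right _ _)
    rw [List.foldl_cons, ih hnt _ hd', htopple, List.toFinset_cons]
    by_cases hxa : x = a
    · subst hxa
      simp [hat]
    · have hni : a ∉ t.toFinset.erase x := by simp [hat]
      rw [Finset.erase_insert_of_ne (Ne.symm hxa), Finset.sum_insert hni, if_neg hxa]
      by_cases hxt : x ∈ t
      · have := hd x (List.mem_cons_of_mem _ hxt)
        simp only [hxt, List.mem_cons, or_true, if_true]
        omega
      · simp only [hxt, hxa, List.mem_cons, or_false, if_false]
        omega

/-- Sandpile model on a finite multigraph with vertex set `V`, edge multiplicities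
`m` (symmetric, loopless) and sink `q`.  A configuration is a function `c : V → ℕ`
giving the number of grains (only the values at non-sink vertices matter).  The
degree of a vertex `w` is `∑ x, m w x`, and toppling `w` replaces `c` by the
configuration in which `w` loses `deg w` grains and every other vertex `x` gains
`m w x` grains.  Let `S` be the set of non-sink vertices that are unstable in `c`.
Then for every ordering `l` of the elements of `S`, sequentially toppling the
vertices of `l` is legal (each vertex of `l` is unstable in the configuration
obtained by toppling its predecessors), and the resulting configuration does not
depend on the ordering: its value at each non-sink vertex `x` equals
`c x - [x ∈ S] * deg x + ∑_{w ∈ S, w ≠ x} m w x`. -/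
theorem parallel_toppling_abelian {V : Type*} [Fintype V] [DecidableEq V]
    (m : V → V → ℕ) (hsym : ∀ u v : V, m u v = m v u) (hloop : ∀ v : V, m v v = 0)
    (q : V) (c : V → ℕ)
    (deg : V → ℕ) (hdeg : ∀ w : V, deg w = ∑ x : V, m w x)
    (topple : V → (V → ℕ) → (V → ℕ))
    (htopple : ∀ (w : V) (d : V → ℕ) (x : V),
      topple w d x = if x = w then d x - deg w else d x + m w x)
    (S : Finset V) (hS : ∀ w : V, w ∈ S ↔ w ≠ q ∧ deg w ≤ c w)
    (l : List V) (hnd : l.Nodup) (hl : l.toFinset = S) :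
    (∀ (i : ℕ) (hi : i < l.length),
      deg (l[i]'hi) ≤ ((l.take i).foldl (fun d w => topple w d) c) (l[i]'hi)) ∧
    (∀ x : V, x ≠ q →
      (l.foldl (fun d w => topple w d) c) x =
        c x - (if x ∈ S then deg x else 0) + ∑ w ∈ S.erase x, m w x) := by
  subst hl
  have hc : ∀ w ∈ l, deg w ≤ c w := fun w hw => ((hS w).mp (List.mem_toFinset.mpr hw)).2
  refine ⟨fun i hi => ?_, fun x _ => ?_⟩
  · have hni : l[i] ∉ l.take i := by
      intro h
      obtain ⟨j, hj, hji⟩ := List.mem_take_iff_getElem.mp h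
      have := (hnd.getElem_inj_iff).mp hji
      omega
    rw [foldl_topple_apply m deg topple htopple _ (hnd.sublist (List.take_sublist i l)) c
      (fun w hw => hc w (List.mem_of_mem_take hw)), if_neg hni, Nat.sub_zero]
    exact (hc _ (List.getElem_mem hi)).trans (Nat.le_add_right _ _)
  · rw [foldl_topple_apply m deg topple htopple l hnd c hc]
    simp only [List.mem_toFinset]
end

section
/- Let G = (V, E) be a finite connected graph and let g = |E| − |V| + 1. If c : V → ℤ is an initial configuration of the dollar game whose total number of dollars N = Σ_v c(v) satisfies N ≥ g, then there is a winning strategy: there exists a function σ : V → ℤ such that the configuration c − Lσ is non-negative at every vertex, where L is the Laplacian matrix of G. (Equivalently, c is equivalent modulo the Laplacian lattice of G to a configuration in which no vertex is in debt.) -/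
/-!
Fix a vertex `q`.  Write `D = c - Lσ` for the configuration reached by a script `σ`.

* Because `G` is connected, there is a `τ` with `Lτ ≤ -1` away from `q`
  (`exists_strict_subharmonic`): a steeply convex decreasing function of the distance to `q`.
* A large multiple of `τ` is a script that brings every vertex other than `q` out of debt.  By the
  maximum principle applied to `σ + Kτ`, the scripts doing so with `σ q = 0` are bounded above.
  Hence one of them has maximal sum, and for it no nonempty set `S` of vertices
  avoiding `q` can give one dollar along each edge leaving `S` without some vertex of `S` going
  into debt: `D` is `q`-reduced (`exists_reduced`).
* Dhar's burning argument (`dhar_bound`): burning the vertices one at a time, starting from `q`, each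
  vertex burnt has fewer dollars than it has burnt neighbours.  Each edge is counted once this way,
  so the dollars away from `q` number at most `|E| - (|V| - 1) = g`, and `D q ≥ N - g ≥ 0`.
-/

namespace DollarGame

variable {V : Type*} [Fintype V] [DecidableEq V] (G : SimpleGraph V) [DecidableRel G.Adj]

lemma lap_apply (σ : V → ℤ) (v : V) :
    (G.lapMatrix ℤ).mulVec σ v = ∑ u, G.adjMatrix ℤ v u * (σ v - σ u) := by
  rw [SimpleGraph.lapMatrix_mulVec_apply]
  simp only [SimpleGraph.adjMatrix_apply, ite_mul, one_mul, zero_mul, mul_sub,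
    Finset.sum_sub_distrib, ← Finset.sum_filter, Finset.sum_const, nsmul_eq_mul,
    ← SimpleGraph.neighborFinset_eq_filter, SimpleGraph.card_neighborFinset_eq_degree]

lemma adj_nonneg (v u : V) : 0 ≤ G.adjMatrix ℤ v u := by
  rw [SimpleGraph.adjMatrix_apply]; split_ifs <;> simp

/-- The weights `(n + 1) ^ (n - dist q v)` with `n = |V|` drop so fast with the distance that the
gain from one neighbour closer to `q` outweighs the loss to all the other neighbours. -/
lemma exists_strict_subharmonic (hconn : G.Connected) (q : V) :
    ∃ τ : V → ℤ, ∀ v, v ≠ q → (G.lapMatrix ℤ).mulVec τ v ≤ -1 := by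
  set n := Fintype.card V with hn
  set B : ℤ := n + 1 with hB
  have hB1 : 1 ≤ B := by omega
  refine ⟨fun v => B ^ (n - G.dist q v), fun v hv => ?_⟩
  have hlt : G.dist q v < n := by
    obtain ⟨p, hp, hl⟩ := hconn.exists_path_of_dist q v
    rw [← hl]; exact hp.length_lt
  have hpos : 0 < G.dist q v := hconn.pos_dist_of_ne hv.symm
  obtain ⟨k, hk⟩ : ∃ k, n - G.dist q v = k + 1 := ⟨n - G.dist q v - 1, by omega⟩
  -- the neighbour preceding `v` on a geodesic from `q`
  obtain ⟨w, hwadj, hw⟩ : ∃ w, G.Adj v w ∧ G.dist q w + 1 = G.dist q v := by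
    obtain ⟨p, hl⟩ := hconn.exists_walk_length_eq_dist v q
    cases p with
    | nil => exact absurd rfl hv
    | cons h p' =>
      rename_i w
      refine ⟨w, h, ?_⟩
      have h1 := SimpleGraph.dist_le p'
      have h2 := h.diff_dist_adj (u := q)
      rw [SimpleGraph.Walk.length_cons] at hl
      rw [SimpleGraph.dist_comm (u := v)] at hl
      rw [SimpleGraph.dist_comm (u := w)] at h1
      omega
  have hBk : 1 ≤ B ^ k := one_le_pow₀ hB1
  rw [lap_apply, ← Finset.add_sum_erase _ _ (Finset.mem_univ w)]
  have hterm : ∀ u ∈ Finset.univ.erase w,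
      G.adjMatrix ℤ v u * (B ^ (n - G.dist q v) - B ^ (n - G.dist q u)) ≤ B ^ k * (B - 1) := by
    intro u _
    rw [SimpleGraph.adjMatrix_apply]
    split_ifs with h
    · have h2 : G.dist q u ≤ G.dist q v + 1 := by
        have := hconn.dist_triangle (u := q) (v := v) (w := u)
        rwa [SimpleGraph.dist_eq_one_iff_adj.2 h] at this
      have : B ^ k ≤ B ^ (n - G.dist q u) := pow_le_pow_right₀ hB1 (by omega)
      rw [hk, pow_succ]; linarith
    · rw [zero_mul]; exact mul_nonneg (by linarith) (by linarith)
  have hsum := Finset.sum_le_card_nsmul _ _ _ hterm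
  rw [Finset.card_erase_of_mem (Finset.mem_univ w), Finset.card_univ, nsmul_eq_mul,
    Nat.cast_sub (by omega), ← hn] at hsum
  have hwk : n - G.dist q w = k + 2 := by omega
  have hA : G.adjMatrix ℤ v w = 1 := by simp [hwadj]
  have hn1 : (1 : ℤ) ≤ n := by omega
  simp only [hA, hk, hwk, one_mul] at hsum ⊢
  have hnB : (n : ℤ) = B - 1 := by omega
  rw [hnB] at hsum hn1
  have : 1 ≤ B ^ k * (B - 1) := by nlinarith
  push_cast at hsum
  nlinarith [pow_succ B k, pow_succ B (k + 1)]

/-- Existence of a `q`-reduced configuration equivalent to `c`: off `q` nobody is in debt, and every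
nonempty `S` avoiding `q` has a vertex poorer than its number of neighbours outside `S`. -/
lemma exists_reduced (hconn : G.Connected) (q : V) (c : V → ℤ) :
    ∃ σ : V → ℤ, (∀ v, v ≠ q → 0 ≤ c v - (G.lapMatrix ℤ).mulVec σ v) ∧
      ∀ S : Finset V, q ∉ S → S.Nonempty →
        ∃ v ∈ S, c v - (G.lapMatrix ℤ).mulVec σ v + 1 ≤ ∑ u ∈ Sᶜ, G.adjMatrix ℤ v u := by
  obtain ⟨τ, hτ⟩ := exists_strict_subharmonic G hconn q
  set C : ℤ := ∑ v, |c v| with hC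
  have hcC : ∀ v, |c v| ≤ C := fun v =>
    Finset.single_le_sum (f := fun v => |c v|) (fun _ _ => abs_nonneg _) (Finset.mem_univ v)
  have hC0 : 0 ≤ C := (abs_nonneg _).trans (hcC q)
  let P : (V → ℤ) → Prop := fun σ =>
    σ q = 0 ∧ ∀ v, v ≠ q → (G.lapMatrix ℤ).mulVec σ v ≤ c v
  have hne : ∃ z, ∃ σ, P σ ∧ ∑ v, σ v = z := by
    refine ⟨_, fun v => C * (τ v - τ q), ⟨by simp, fun v hv => ?_⟩, rfl⟩
    have h1 := hτ v hv
    rw [lap_apply] at h1 ⊢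
    have h2 : ∑ u, G.adjMatrix ℤ v u * (C * (τ v - τ q) - C * (τ u - τ q)) =
        C * ∑ u, G.adjMatrix ℤ v u * (τ v - τ u) := by
      rw [Finset.mul_sum]; exact Finset.sum_congr rfl fun u _ => by ring
    rw [h2]
    have := neg_abs_le (c v)
    have := hcC v
    nlinarith
  have hbd : ∀ z, (∃ σ, P σ ∧ ∑ v, σ v = z) → z ≤ ∑ v, ((C + 1) * (τ q - τ v)) := by
    rintro z ⟨σ, ⟨hq, hσ⟩, rfl⟩
    -- maximum principle: `σ + (C + 1) τ` has negative Laplacian off `q`, so its maximum is at `q`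
    have : Nonempty V := ⟨q⟩
    obtain ⟨m, hm⟩ := Finite.exists_max fun v => σ v + (C + 1) * τ v
    have hmq : m = q := by
      by_contra hmq
      have h1 := hτ m hmq
      have h2 := hσ m hmq
      rw [lap_apply] at h1 h2
      have h3 : 0 ≤ ∑ u, G.adjMatrix ℤ m u *
          ((σ m + (C + 1) * τ m) - (σ u + (C + 1) * τ u)) :=
        Finset.sum_nonneg fun u _ => mul_nonneg (adj_nonneg G m u) (sub_nonneg.2 (hm u))
      have h4 : ∑ u, G.adjMatrix ℤ m u * ((σ m + (C + 1) * τ m) - (σ u + (C + 1) * τ u)) =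
          ∑ u, G.adjMatrix ℤ m u * (σ m - σ u) +
            (C + 1) * ∑ u, G.adjMatrix ℤ m u * (τ m - τ u) := by
        rw [Finset.mul_sum, ← Finset.sum_add_distrib]
        exact Finset.sum_congr rfl fun u _ => by ring
      have := le_abs_self (c m)
      have := hcC m
      nlinarith
    subst hmq
    refine Finset.sum_le_sum fun v _ => ?_
    have := hm v
    simp only [hq] at this
    linarith
  obtain ⟨z, ⟨σ, ⟨hq, hσ⟩, rfl⟩, hmax⟩ := Int.exists_greatest_of_bdd ⟨_, hbd⟩ hne
  refine ⟨σ, fun v hv => sub_nonneg.2 (hσ v hv), fun S hqS hS => ?_⟩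
  by_contra! hcon
  -- otherwise firing `S` once more keeps all vertices off `q` out of debt and increases the sum
  have hP : P (fun v => σ v + if v ∈ S then 1 else 0) := by
    refine ⟨by simp [hq, hqS], fun v hv => ?_⟩
    have h1 := hσ v hv
    have h2 := hcon v
    rw [lap_apply] at h1 h2 ⊢
    have h3 : ∑ u, G.adjMatrix ℤ v u *
        ((σ v + if v ∈ S then 1 else 0) - (σ u + if u ∈ S then 1 else 0)) =
        ∑ u, G.adjMatrix ℤ v u * (σ v - σ u) +
        ∑ u, G.adjMatrix ℤ v u * ((if v ∈ S then 1 else 0) - (if u ∈ S then 1 else 0)) := by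
      rw [← Finset.sum_add_distrib]
      exact Finset.sum_congr rfl fun u _ => by ring
    rw [h3]
    by_cases hvS : v ∈ S
    · have h4 : ∑ u, G.adjMatrix ℤ v u * ((if v ∈ S then 1 else 0) - (if u ∈ S then 1 else 0)) =
          ∑ u ∈ Sᶜ, G.adjMatrix ℤ v u := by
        rw [← Finset.sum_subset (Finset.subset_univ Sᶜ)]
        · refine Finset.sum_congr rfl fun u hu => ?_
          simp [hvS, Finset.mem_compl.1 hu]
        · intro u _ hu
          have : u ∈ S := by simpa using hu
          simp [hvS, this]
      have := h2 hvS
      rw [h4]; linarith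
    · have h4 : ∑ u, G.adjMatrix ℤ v u *
          ((if v ∈ S then 1 else 0) - (if u ∈ S then 1 else 0)) ≤ 0 := by
        refine Finset.sum_nonpos fun u _ => mul_nonpos_of_nonneg_of_nonpos (adj_nonneg G v u) ?_
        rw [if_neg hvS]; split_ifs <;> simp
      linarith
  have h5 := hmax _ ⟨fun v => σ v + if v ∈ S then 1 else 0, hP, rfl⟩
  rw [Finset.sum_add_distrib, Finset.sum_ite_mem, Finset.univ_inter, Finset.sum_const,
    nsmul_eq_mul, mul_one] at h5
  have := hS.card_pos
  omega

/-- Dhar's burning bound: the dollars on `S` number at most the edges meeting `S`, minus `|S|`.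
Edges are counted twice, as ordered pairs of adjacent vertices. -/
lemma dhar_bound (q : V) (D : V → ℤ)
    (hD : ∀ S : Finset V, q ∉ S → S.Nonempty →
      ∃ v ∈ S, D v + 1 ≤ ∑ u ∈ Sᶜ, G.adjMatrix ℤ v u) (S : Finset V) (hq : q ∉ S) :
    2 * ∑ v ∈ S, D v + 2 * (S.card : ℤ) + ∑ u ∈ Sᶜ, ∑ v ∈ Sᶜ, G.adjMatrix ℤ u v ≤
      ∑ u, ∑ v, G.adjMatrix ℤ u v := by
  induction S using Finset.strongInduction with
  | H S ih =>
    rcases S.eq_empty_or_nonempty with rfl | hS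
    · simp
    obtain ⟨v, hv, hle⟩ := hD S hq hS
    have h1 := ih (S.erase v) (Finset.erase_ssubset hv) fun h => hq (Finset.mem_of_mem_erase h)
    have hvc : v ∉ Sᶜ := by simpa using hv
    rw [Finset.compl_erase, Finset.sum_insert hvc, Finset.sum_insert hvc] at h1
    simp only [Finset.sum_insert hvc, Finset.sum_add_distrib] at h1
    have hsymm : ∑ u ∈ Sᶜ, G.adjMatrix ℤ u v = ∑ u ∈ Sᶜ, G.adjMatrix ℤ v u :=
      Finset.sum_congr rfl fun u _ => by simp [SimpleGraph.adjMatrix_apply, G.adj_comm]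
    have hvv : G.adjMatrix ℤ v v = 0 := by simp
    rw [hsymm, hvv] at h1
    have h2 := Finset.add_sum_erase S D hv
    have h3 := Finset.card_erase_add_one hv
    zify at h3
    linarith

end DollarGame


/-- **Dollar game, winning case** (Baker–Norine).  Let `G` be a finite connected
graph with genus `g = |E| - |V| + 1`.  If `c : V → ℤ` is an initial configuration
of the dollar game whose total number of dollars `N = ∑ v, c v` satisfies `N ≥ g`,
then there is a winning strategy: there exists `σ : V → ℤ` such that the
configuration `c - L σ` is non-negative at every vertex, where `L` is the Laplacian
matrix of `G`. -/
theorem dollar_game_winnable {V : Type*} [Fintype V] [DecidableEq V]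
    (G : SimpleGraph V) [DecidableRel G.Adj] (hconn : G.Connected)
    (c : V → ℤ)
    (hN : (G.edgeFinset.card : ℤ) - (Fintype.card V : ℤ) + 1 ≤ ∑ v : V, c v) :
    ∃ σ : V → ℤ, ∀ v : V, 0 ≤ c v - (G.lapMatrix ℤ).mulVec σ v := by
  obtain ⟨q⟩ := hconn.nonempty
  obtain ⟨σ, hoff, hred⟩ := DollarGame.exists_reduced G hconn q c
  refine ⟨σ, fun v => ?_⟩
  by_cases hv : v = q
  · subst hv
    have h1 := DollarGame.dhar_bound G v _ hred {v}ᶜ (by simp)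
    -- playing preserves the total number of dollars
    have hL : ∑ u, (G.lapMatrix ℤ).mulVec σ u = 0 := by
      have h := Matrix.dotProduct_mulVec (fun _ => 1) (G.lapMatrix ℤ) σ
      rw [← Matrix.mulVec_transpose, (G.isSymm_lapMatrix (R := ℤ)).eq,
        SimpleGraph.lapMatrix_mulVec_const_eq_zero, zero_dotProduct] at h
      simpa [dotProduct] using h
    have hE : ∑ u, ∑ w, G.adjMatrix ℤ u w = 2 * (G.edgeFinset.card : ℤ) := by
      have h := G.sum_degrees_eq_twice_card_edges
      zify at h
      rw [← h]
      refine Finset.sum_congr rfl fun u _ => ?_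
      simp [SimpleGraph.adjMatrix_apply, ← SimpleGraph.neighborFinset_eq_filter]
    have hcard := Finset.card_compl_add_card ({v} : Finset V)
    rw [Finset.card_singleton] at hcard
    zify at hcard
    have hsum := Finset.sum_compl_add_sum {v} fun u => c u - (G.lapMatrix ℤ).mulVec σ u
    rw [Finset.sum_singleton, Finset.sum_sub_distrib (s := Finset.univ), hL] at hsum
    rw [compl_compl, Finset.sum_singleton, Finset.sum_singleton, hE] at h1
    have hvv : G.adjMatrix ℤ v v = 0 := by simp
    linarith
  · exact hoff v hv
end

section
/- Let G = (V, E) be a finite connected graph and let g = |E| − |V| + 1. For every integer N with 0 ≤ N < g − 1, there exists an initial configuration c : V → ℤ of the dollar game with total number of dollars Σ_v c(v) = N for which no winning strategy exists: for every σ : V → ℤ, the configuration c − Lσ has a vertex with a negative value, where L is the Laplacian matrix of G. -/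
/-!
Fix a linear order on the vertices (through an injection `e : V → ℕ`) and orient every edge
upwards. The configuration `v ↦ indeg v - 1` has total `|E| - |V| = g - 1`, and it cannot be won:
given `σ`, let `v` be the `e`-smallest vertex among those maximizing `σ`. All terms `σ v - σ u` of
`(L σ) v = ∑_{u ∼ v} (σ v - σ u)` are non-negative, and they are at least `1` for the in-neighbours
`u` of `v`, since these come before `v` and so do not maximize `σ`. Hence `(L σ) v ≥ indeg v`, and
`v` ends in debt. Removing `g - 1 - N` dollars from one vertex brings the total down to `N` and
keeps the configuration unwinnable.
-/

/-- The in-degree of `v` when each edge of `G` is oriented towards its endpoint with the larger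
value of `e`. -/
def dollarIndeg {V : Type*} [Fintype V] (G : SimpleGraph V) [DecidableRel G.Adj] (e : V → ℕ)
    (v : V) : ℤ :=
  ∑ u ∈ G.neighborFinset v, if e u < e v then 1 else 0

/-- Every edge contributes to the in-degree of exactly one of its endpoints. -/
theorem sum_dollarIndeg {V : Type*} [Fintype V] [DecidableEq V] (G : SimpleGraph V)
    [DecidableRel G.Adj] {e : V → ℕ} (he : Function.Injective e) :
    ∑ v, dollarIndeg G e v = (G.edgeFinset.card : ℤ) := by
  have hswap : ∑ v, dollarIndeg G e v
      = ∑ v, ∑ u ∈ G.neighborFinset v, if e v < e u then (1 : ℤ) else 0 := by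
    unfold dollarIndeg
    refine Finset.sum_comm' fun x y => ?_
    simp [G.adj_comm]
  have hdeg : ∑ v, (G.degree v : ℤ) = 2 * (G.edgeFinset.card : ℤ) := by
    exact_mod_cast G.sum_degrees_eq_twice_card_edges
  have hadd : ∑ v, dollarIndeg G e v
      + ∑ v, ∑ u ∈ G.neighborFinset v, (if e v < e u then (1 : ℤ) else 0)
      = ∑ v, (G.degree v : ℤ) := by
    rw [← Finset.sum_add_distrib]
    refine Finset.sum_congr rfl fun v _ => ?_
    rw [dollarIndeg, ← Finset.sum_add_distrib, ← G.card_neighborFinset_eq_degree,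
      Finset.cast_card]
    refine Finset.sum_congr rfl fun u hu => ?_
    have hne : e u ≠ e v := fun h => G.ne_of_adj ((G.mem_neighborFinset v u).1 hu) (he h).symm
    split_ifs <;> omega
  omega

theorem exists_dollarIndeg_le_lapMatrix_mulVec {V : Type*} [Fintype V] [DecidableEq V] [Nonempty V]
    (G : SimpleGraph V) [DecidableRel G.Adj] (e : V → ℕ) (σ : V → ℤ) :
    ∃ v, dollarIndeg G e v ≤ (G.lapMatrix ℤ).mulVec σ v := by
  obtain ⟨m, hm⟩ := Finite.exists_max σ
  obtain ⟨v, hv, hmin⟩ := Finset.exists_min_image (Finset.univ.filter fun v => σ v = σ m) e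
    ⟨m, by simp⟩
  simp only [Finset.mem_filter, Finset.mem_univ, true_and] at hv hmin
  refine ⟨v, ?_⟩
  have hL : (G.lapMatrix ℤ).mulVec σ v = ∑ u ∈ G.neighborFinset v, (σ v - σ u) := by
    rw [SimpleGraph.lapMatrix_mulVec_apply, Finset.sum_sub_distrib]
    simp
  rw [hL, dollarIndeg]
  refine Finset.sum_le_sum fun u _ => ?_
  have h1 := hm u
  have h2 := hmin u
  split_ifs with h
  · by_contra hlt
    have := h2 (by omega)
    omega
  · omega

/-- **Dollar game, losing case** (Baker–Norine).  Let `G` be a finite connected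
graph with genus `g = |E| - |V| + 1`.  For every integer `N` with `0 ≤ N < g - 1`,
there exists an initial configuration `c : V → ℤ` of the dollar game with total
number of dollars `∑ v, c v = N` for which no winning strategy exists: for every
`σ : V → ℤ`, the configuration `c - L σ` has a vertex with a negative value, where
`L` is the Laplacian matrix of `G`. -/
theorem dollar_game_not_winnable {V : Type*} [Fintype V] [DecidableEq V]
    (G : SimpleGraph V) [DecidableRel G.Adj] (hconn : G.Connected)
    (N : ℤ) (hN0 : 0 ≤ N)
    (hN : N < (G.edgeFinset.card : ℤ) - (Fintype.card V : ℤ) + 1 - 1) :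
    ∃ c : V → ℤ, (∑ v : V, c v) = N ∧
      ∀ σ : V → ℤ, ∃ v : V, c v - (G.lapMatrix ℤ).mulVec σ v < 0 := by
  haveI := hconn.nonempty
  obtain ⟨v₀⟩ := hconn.nonempty
  let e : V → ℕ := fun v => (Fintype.equivFin V v : ℕ)
  have he : Function.Injective e := Fin.val_injective.comp (Fintype.equivFin V).injective
  refine ⟨fun v => dollarIndeg G e v - 1 -
    if v = v₀ then (G.edgeFinset.card : ℤ) - (Fintype.card V : ℤ) - N else 0, ?_, fun σ => ?_⟩
  · rw [Finset.sum_sub_distrib, Finset.sum_sub_distrib, sum_dollarIndeg G he]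
    simp
  · obtain ⟨v, hv⟩ := exists_dollarIndeg_le_lapMatrix_mulVec G e σ
    refine ⟨v, ?_⟩
    dsimp only
    split_ifs <;> omega
end
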